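/- Let Q be a stationary ergodic probability measure on Ω = {1,...,D}^ℤ and let k ≥ 0. Then Q-almost surely lim_{n→∞} (1/n)·(−log B(X_{k+1}^n|X_1^k, k)) = E_Q[−log Q(X_{k+1}|X_1^k)], where Q(X_{k+1}|X_1^k) = Q(X_1^{k+1})/Q(X_1^k) evaluated at the sample path (Q-almost surely well defined). -/

import Mathlib

open Filter MeasureTheory
open scoped Topology

/-- Number of occurrences `c(w|z)` of `w` as a substring of `z`. -/
def cnt {D : ℕ} (w z : List (Fin D)) : ℕ :=
  ((List.range (z.length - w.length + 1)).filter
    (fun i => (z.drop i).take w.length = w)).length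

/-- Count `c(w | z_1^{m-1})` of `w` in the string `z` with its last symbol removed,
with the convention that counting in a block of length `-1` (i.e. when `z` itself is
empty) gives `0`. -/
def cntPred {D : ℕ} (w z : List (Fin D)) : ℕ :=
  if z = [] then 0 else cnt w z.dropLast

/-- The prefix `x_1^n` of the one-sided sequence `x` (0-indexed: `x i = x_{i+1}`). -/
def pref {D : ℕ} (x : ℕ → Fin D) (n : ℕ) : List (Fin D) :=
  (List.range n).map x

/-- Adaptive Markov predictor: the natural-number index corresponds to the Markov
order shifted by one, so `Bpred D xs a (k+1) = B(a | xs, k)` and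
`Bpred D xs a 0 = B(a | xs, -1) = 1/D`, where
`B(x_{n+1}|x_1^n, k) = (c(x_{n+1-k}^{n+1}|x_1^n) + B(x_{n+1}|x_1^n, k-1)) /
(c(x_{n+1-k}^{n}|x_1^{n-1}) + 1)`.  Counts of substrings whose indices fall outside
the string are taken to be zero. -/
noncomputable def Bpred (D : ℕ) (xs : List (Fin D)) (a : Fin D) : ℕ → ℝ
  | 0 => 1 / D
  | k + 1 =>
    if k ≤ xs.length then
      ((cnt (xs.drop (xs.length - k) ++ [a]) xs : ℝ) + Bpred D xs a k) /
      ((cntPred (xs.drop (xs.length - k)) xs : ℝ) + 1)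
    else Bpred D xs a k

/-- The two-sided sequence space `Ω = {1,...,D}^ℤ` with the product σ-algebra. -/
abbrev Omega (D : ℕ) := ℤ → Fin D

/-- The shift `T : Ω → Ω`. -/
def shiftT (D : ℕ) : Omega D → Omega D := fun ω i => ω (i + 1)

/-- The cylinder set `{X_1 = x 0, ..., X_n = x (n-1)}`. -/
def cylSet (D : ℕ) (x : ℕ → Fin D) (n : ℕ) : Set (Omega D) :=
  {ω | ∀ i < n, ω ((i : ℤ) + 1) = x i}

/-- The one-sided sample path `X_1, X_2, ...` of `ω` (0-indexed). -/
def path (D : ℕ) (ω : Omega D) : ℕ → Fin D := fun i => ω ((i : ℤ) + 1)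

/-- The cylinder probability `Q(x_1^n)`. -/
noncomputable def Qstr (D : ℕ) (Q : Measure (Omega D)) (x : ℕ → Fin D) (n : ℕ) : ℝ :=
  (Q (cylSet D x n)).toReal

/-!
Birkhoff's ergodic theorem, proved by Garsia's maximal argument: let `M_n` be the maximum of the
Birkhoff sums `S_0, …, S_n` of `g`. As `M_n` is monotone in `n` and `T` preserves `μ`, the integral
of `M_{n+1} - M_n ∘ T` is nonnegative. Where the sums are unbounded above this difference is
eventually equal to `g`, so if that happens almost everywhere then `∫ g ≥ 0` by dominated
convergence. By ergodicity, `∫ g < 0` therefore forces the sums to be bounded above almost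
everywhere, and one applies this to `f - c` for `c > ∫ f` and to `-f`.

Consequently almost every sample path has word frequencies `Q(w)`. Along such a path the predictor
for a fixed context `w` and symbol `a` tends to `Q(wa) / Q(w)`, the correction terms being `O(1/n)`.
There are only finitely many pairs of a context of length `k` and a symbol, so the convergence is
uniform over them and the logarithmic losses of `B` and of the conditional probabilities of `Q`
have the same Cesàro limit. For the latter this limit is the conditional entropy, again by
Birkhoff's theorem.
-/

section BirkhoffMax

variable {α M : Type*} [AddCommGroup M] [LinearOrder M] (T : α → α) (g : α → M)

/-- The running maximum `max_{0 ≤ i ≤ n} S_i` of the Birkhoff sums `S_i` of `g`, as a monotone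
sequence of functions. Since the empty sum `S_0 = 0` is included, it is nonnegative. -/
def birkhoffMax : ℕ →o (α → M) :=
  partialSups (birkhoffSum T g)

lemma birkhoffSum_le_birkhoffMax {i n : ℕ} (hi : i ≤ n) (x : α) :
    birkhoffSum T g i x ≤ birkhoffMax T g n x :=
  le_partialSups_of_le (birkhoffSum T g) hi x

lemma birkhoffMax_nonneg (n : ℕ) (x : α) : 0 ≤ birkhoffMax T g n x :=
  birkhoffSum_le_birkhoffMax T g n.zero_le x

lemma birkhoffMax_succ (n : ℕ) (x : α) :
    birkhoffMax T g (n + 1) x = max (birkhoffMax T g n x) (birkhoffSum T g (n + 1) x) :=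
  congrFun (partialSups_add_one (birkhoffSum T g) n) x

variable [IsOrderedAddMonoid M]

lemma birkhoffMax_succ' (n : ℕ) (x : α) :
    birkhoffMax T g (n + 1) x = max 0 (g x + birkhoffMax T g n (T x)) := by
  induction n with
  | zero => rw [birkhoffMax_succ]; simp [birkhoffMax]
  | succ n ih =>
    rw [birkhoffMax_succ, ih, birkhoffSum_succ', birkhoffMax_succ T g n (T x), max_assoc,
      max_add_add_left]

lemma abs_birkhoffMax_succ_sub_le (n : ℕ) (x : α) :
    |birkhoffMax T g (n + 1) x - birkhoffMax T g n (T x)| ≤ |g x| := by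
  have hnonneg := birkhoffMax_nonneg T g n (T x)
  rw [birkhoffMax_succ']
  rcases max_cases 0 (g x + birkhoffMax T g n (T x)) with ⟨hmax, hle⟩ | ⟨hmax, -⟩
  · rw [hmax, zero_sub, abs_neg, abs_of_nonneg hnonneg]
    exact (le_neg_iff_add_nonpos_left.mpr hle).trans (neg_le_abs (g x))
  · rw [hmax, add_sub_cancel_right]

lemma bddAbove_range_birkhoffSum_apply_iff (x : α) :
    BddAbove (Set.range fun n ↦ birkhoffSum T g n (T x)) ↔
      BddAbove (Set.range fun n ↦ birkhoffSum T g n x) := by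
  simp only [bddAbove_def, Set.forall_mem_range]
  constructor
  · rintro ⟨C, hC⟩
    refine ⟨max 0 (g x + C), fun n ↦ ?_⟩
    cases n with
    | zero => simp
    | succ n =>
      rw [birkhoffSum_succ']
      exact le_max_of_le_right (add_le_add_right (hC n) (g x))
  · rintro ⟨C, hC⟩
    refine ⟨C - g x, fun n ↦ ?_⟩
    rw [le_sub_iff_add_le', ← birkhoffSum_succ']
    exact hC (n + 1)

lemma eventually_birkhoffMax_succ_sub_eq {x : α}
    (hx : ¬ BddAbove (Set.range fun n ↦ birkhoffSum T g n x)) :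
    ∀ᶠ n in atTop, birkhoffMax T g (n + 1) x - birkhoffMax T g n (T x) = g x := by
  rw [← bddAbove_range_birkhoffSum_apply_iff, not_bddAbove_iff] at hx
  obtain ⟨_, ⟨N, rfl⟩, hN⟩ := hx (-g x)
  filter_upwards [eventually_ge_atTop N] with n hn
  have hpos : 0 ≤ g x + birkhoffMax T g n (T x) :=
    neg_le_iff_add_nonneg'.mp (hN.le.trans (birkhoffSum_le_birkhoffMax T g hn (T x)))
  rw [birkhoffMax_succ', max_eq_right hpos, add_sub_cancel_right]

end BirkhoffMax

lemma nullMeasurableSet_bddAbove_range {α β ι : Type*} [Countable ι] [MeasurableSpace α]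
    {μ : Measure α} [TopologicalSpace β] [LinearOrder β] [OrderTopology β]
    [SecondCountableTopology β] [MeasurableSpace β] [BorelSpace β] {f : ι → α → β}
    (hf : ∀ i, AEMeasurable (f i) μ) :
    NullMeasurableSet {x | BddAbove (Set.range fun i ↦ f i x)} μ := by
  have hmk := measurableSet_bddAbove_range fun i ↦ (hf i).measurable_mk
  refine hmk.nullMeasurableSet.congr ?_
  filter_upwards [ae_all_iff.mpr fun i ↦ (hf i).ae_eq_mk] with x hx
  exact congrArg BddAbove (congrArg Set.range (funext fun i ↦ (hx i).symm))

section Birkhoff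

variable {α : Type*} [MeasurableSpace α] {μ : Measure α} {T : α → α} {g : α → ℝ}

lemma integrable_birkhoffSum (hT : MeasurePreserving T μ μ) (hg : Integrable g μ) (n : ℕ) :
    Integrable (birkhoffSum T g n) μ :=
  integrable_finsetSum _ fun i _ ↦ (hT.iterate i).integrable_comp_of_integrable hg

lemma integrable_birkhoffMax (hT : MeasurePreserving T μ μ) (hg : Integrable g μ) (n : ℕ) :
    Integrable (birkhoffMax T g n) μ := by
  induction n with
  | zero => exact integrable_birkhoffSum hT hg 0
  | succ n ih =>
    rw [birkhoffMax, partialSups_add_one]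
    exact ih.sup (integrable_birkhoffSum hT hg (n + 1))

lemma integral_birkhoffMax_succ_sub_nonneg (hT : MeasurePreserving T μ μ) (hg : Integrable g μ)
    (n : ℕ) : 0 ≤ ∫ x, (birkhoffMax T g (n + 1) x - birkhoffMax T g n (T x)) ∂μ := by
  have hint := integrable_birkhoffMax hT hg
  have hinv : ∫ x, birkhoffMax T g n (T x) ∂μ = ∫ x, birkhoffMax T g n x ∂μ := by
    have hmeas : AEStronglyMeasurable (birkhoffMax T g n) (μ.map T) := by
      rw [hT.map_eq]
      exact (hint n).aestronglyMeasurable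
    rw [← integral_map hT.aemeasurable hmeas, hT.map_eq]
  have hintT : Integrable (fun x ↦ birkhoffMax T g n (T x)) μ :=
    hT.integrable_comp_of_integrable (hint n)
  rw [integral_sub (hint (n + 1)) hintT, hinv, sub_nonneg]
  exact integral_mono (hint n) (hint (n + 1)) ((birkhoffMax T g).monotone n.le_succ)

lemma integral_nonneg_of_ae_not_bddAbove_birkhoffSum (hT : MeasurePreserving T μ μ)
    (hg : Integrable g μ)
    (hunbdd : ∀ᵐ x ∂μ, ¬ BddAbove (Set.range fun n ↦ birkhoffSum T g n x)) :
    0 ≤ ∫ x, g x ∂μ := by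
  have hint := integrable_birkhoffMax hT hg
  have hlim : Tendsto (fun n ↦ ∫ x, (birkhoffMax T g (n + 1) x - birkhoffMax T g n (T x)) ∂μ)
      atTop (𝓝 (∫ x, g x ∂μ)) := by
    refine tendsto_integral_of_dominated_convergence (fun x ↦ |g x|) (fun n ↦ ?_) hg.abs
      (fun n ↦ .of_forall fun x ↦ abs_birkhoffMax_succ_sub_le T g n x) ?_
    · exact ((hint (n + 1)).sub
        (hT.integrable_comp_of_integrable (hint n))).aestronglyMeasurable
    · filter_upwards [hunbdd] with x hx
      exact tendsto_nhds_of_eventually_eq (eventually_birkhoffMax_succ_sub_eq T g hx)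
  exact ge_of_tendsto' hlim (integral_birkhoffMax_succ_sub_nonneg hT hg)

lemma ae_bddAbove_range_birkhoffSum (hT : Ergodic T μ) (hg : Integrable g μ)
    (hneg : ∫ x, g x ∂μ < 0) :
    ∀ᵐ x ∂μ, BddAbove (Set.range fun n ↦ birkhoffSum T g n x) := by
  have hmeas := nullMeasurableSet_bddAbove_range fun n ↦
    (integrable_birkhoffSum hT.toMeasurePreserving hg n).aemeasurable
  have hinv : T ⁻¹' {x | BddAbove (Set.range fun n ↦ birkhoffSum T g n x)} =
      {x | BddAbove (Set.range fun n ↦ birkhoffSum T g n x)} :=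
    Set.ext (bddAbove_range_birkhoffSum_apply_iff T g)
  exact (hT.quasiErgodic.ae_mem_or_ae_notMem₀ hmeas hinv.eventuallyEq).resolve_right fun hunbdd ↦
    hneg.not_ge (integral_nonneg_of_ae_not_bddAbove_birkhoffSum hT.toMeasurePreserving hg hunbdd)

variable [IsProbabilityMeasure μ]

lemma ae_eventually_birkhoffAverage_lt (hT : Ergodic T μ) (hg : Integrable g μ) {c : ℝ}
    (hc : ∫ x, g x ∂μ < c) : ∀ᵐ x ∂μ, ∀ᶠ n in atTop, birkhoffAverage ℝ T g n x < c := by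
  obtain ⟨b, hgb, hbc⟩ := exists_between hc
  have hneg : ∫ x, (g x - b) ∂μ < 0 := by
    simpa [integral_sub hg (integrable_const b)] using hgb
  filter_upwards [ae_bddAbove_range_birkhoffSum hT (hg.sub (integrable_const b)) hneg] with x hx
  obtain ⟨C, hC⟩ := hx
  have hCn : ∀ᶠ n : ℕ in atTop, C / n < c - b :=
    (tendsto_const_div_atTop_nhds_zero_nat C).eventually_lt_const (sub_pos.mpr hbc)
  filter_upwards [hCn, eventually_gt_atTop 0] with n hn hpos
  have hpos' : (0 : ℝ) < n := Nat.cast_pos.mpr hpos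
  have hsum : birkhoffSum T g n x - n * b ≤ C := by
    simpa [birkhoffSum] using hC (Set.mem_range_self n)
  rw [div_lt_iff₀ hpos'] at hn
  rw [birkhoffAverage, smul_eq_mul, inv_mul_lt_iff₀ hpos']
  linarith

lemma ae_forall_gt_eventually_birkhoffAverage_lt (hT : Ergodic T μ) (hg : Integrable g μ) :
    ∀ᵐ x ∂μ, ∀ c > ∫ y, g y ∂μ, ∀ᶠ n in atTop, birkhoffAverage ℝ T g n x < c := by
  obtain ⟨u, -, hgu, hu⟩ := exists_seq_strictAnti_tendsto (∫ y, g y ∂μ)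
  filter_upwards [ae_all_iff.mpr fun m ↦ ae_eventually_birkhoffAverage_lt hT hg (hgu m)]
    with x hx c hc
  obtain ⟨m, hm⟩ := (hu.eventually_lt_const hc).exists
  exact (hx m).mono fun n hn ↦ hn.trans hm

theorem ae_tendsto_birkhoffAverage (hT : Ergodic T μ) (hg : Integrable g μ) :
    ∀ᵐ x ∂μ, Tendsto (birkhoffAverage ℝ T g · x) atTop (𝓝 (∫ y, g y ∂μ)) := by
  filter_upwards [ae_forall_gt_eventually_birkhoffAverage_lt hT hg,
    ae_forall_gt_eventually_birkhoffAverage_lt hT hg.neg] with x hupper hlower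
  refine tendsto_order.mpr ⟨fun c hc ↦ ?_, hupper⟩
  refine (hlower (-c) (by simpa [integral_neg] using hc)).mono fun n hn ↦ ?_
  simpa [birkhoffAverage_neg] using hn

end Birkhoff

lemma tendsto_add_const_div_natCast_iff {f : ℕ → ℝ} {l : ℝ} (c : ℕ) :
    Tendsto (fun n : ℕ ↦ f (n + c) / n) atTop (𝓝 l) ↔
      Tendsto (fun n : ℕ ↦ f n / n) atTop (𝓝 l) := by
  have hratio : Tendsto (fun n : ℕ ↦ (n : ℝ) / (n + c : ℕ)) atTop (𝓝 1) := by
    simpa using tendsto_natCast_div_add_atTop (c : ℝ)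
  rw [← tendsto_add_atTop_iff_nat (f := fun n : ℕ ↦ f n / n) c]
  constructor <;> intro h
  · refine (mul_one l ▸ h.mul hratio).congr' ?_
    filter_upwards [eventually_gt_atTop 0] with n hn
    exact div_mul_div_cancel₀ (by positivity)
  · refine (div_one l ▸ h.div hratio one_ne_zero).congr' ?_
    filter_upwards [eventually_gt_atTop 0] with n hn
    rw [Pi.div_apply, div_div_div_cancel_right₀ (by positivity)]

lemma tendsto_diagonal_sub_of_finite_range {β ι G : Type*} [AddGroup G] [TopologicalSpace G]
    [IsTopologicalAddGroup G] {l : Filter β} {s : β → ι} (hs : (Set.range s).Finite)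
    {F : ι → β → G} {L : ι → G} (hF : ∀ b, Tendsto (F (s b)) l (𝓝 (L (s b)))) :
    Tendsto (fun b ↦ F (s b) b - L (s b)) l (𝓝 0) := by
  intro U hU
  have huniform : ∀ᶠ b in l, ∀ i ∈ Set.range s, F i b - L i ∈ U := by
    rw [eventually_all_finite hs]
    rintro _ ⟨b, rfl⟩
    exact tendsto_sub_nhds_zero_iff.mpr (hF b) hU
  exact huniform.mono fun b hb ↦ hb (s b) (Set.mem_range_self b)

section Words

variable {D : ℕ}

/-- The block `x_{j+1}^{j+m}` of length `m` of the sequence `x`, in the 1-indexed notation of the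
paper. -/
def window (x : ℕ → Fin D) (j m : ℕ) : List (Fin D) :=
  pref (fun i ↦ x (j + i)) m

@[simp]
lemma length_pref (x : ℕ → Fin D) (n : ℕ) : (pref x n).length = n := by
  simp [pref]

lemma pref_succ (x : ℕ → Fin D) (n : ℕ) : pref x (n + 1) = pref x n ++ [x n] := by
  simp [pref, List.range_succ]

lemma window_succ (x : ℕ → Fin D) (j m : ℕ) :
    window x j (m + 1) = window x j m ++ [x (j + m)] :=
  pref_succ _ m

lemma drop_pref (x : ℕ → Fin D) (j m : ℕ) : (pref x (j + m)).drop j = window x j m := by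
  apply List.ext_getElem <;> simp [pref, window]

lemma take_drop_pref (x : ℕ → Fin D) {i m n : ℕ} (h : i + m ≤ n) :
    ((pref x n).drop i).take m = window x i m := by
  apply List.ext_getElem
  · grind [window, length_pref]
  · simp [pref, window]

lemma pref_eq_ofFn (x : ℕ → Fin D) (n : ℕ) : pref x n = List.ofFn fun i : Fin n ↦ x i := by
  apply List.ext_getElem <;> simp [pref]

lemma cnt_eq_card (w z : List (Fin D)) :
    cnt w z = (Finset.range (z.length - w.length + 1)
      |>.filter fun i ↦ (z.drop i).take w.length = w).card := by
  rw [cnt, ← List.toFinset_card_of_nodup (List.nodup_range.filter _), List.toFinset_filter,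
    List.toFinset_range]
  simp

lemma cnt_pref_add_length (w : List (Fin D)) (x : ℕ → Fin D) (n : ℕ) :
    cnt w (pref x (n + w.length)) =
      ∑ i ∈ Finset.range (n + 1), if window x i w.length = w then 1 else 0 := by
  rw [cnt_eq_card, Finset.card_filter, length_pref, Nat.add_sub_cancel]
  refine Finset.sum_congr rfl fun i hi ↦ ?_
  rw [take_drop_pref x (by grind)]

lemma cntPred_pref_succ (w : List (Fin D)) (x : ℕ → Fin D) (n : ℕ) :
    cntPred w (pref x (n + 1)) = cnt w (pref x n) := by
  simp [cntPred, pref_succ]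

lemma cnt_append_singleton_le_cntPred (w z : List (Fin D)) (a : Fin D) :
    cnt (w ++ [a]) z ≤ cntPred w z := by
  by_cases hz : z = []
  · simp [hz, cnt]
  rw [cntPred, if_neg hz, cnt_eq_card, cnt_eq_card]
  refine Finset.card_le_card fun i ↦ ?_
  simp only [Finset.mem_filter, Finset.mem_range, eq_comm (b := w), eq_comm (b := w ++ [a]),
    ← List.prefix_iff_eq_take]
  rintro ⟨-, hi⟩
  have hlength := hi.length_le
  have hcontext : w <+: z.dropLast.drop i := by
    obtain ⟨t, ht⟩ := hi
    refine ⟨([a] ++ t).dropLast, ?_⟩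
    rw [← List.dropLast_append_of_ne_nil (by simp), ← List.append_assoc, ht,
      List.dropLast_drop_eq_drop_dropLast]
  exact ⟨by grind, hcontext⟩

lemma Bpred_pos (xs : List (Fin D)) (a : Fin D) (k : ℕ) : 0 < Bpred D xs a k := by
  induction k with
  | zero => exact one_div_pos.mpr (Nat.cast_pos.mpr a.pos)
  | succ k ih =>
    rw [Bpred]
    split_ifs
    · positivity
    · exact ih

lemma Bpred_le_one (xs : List (Fin D)) (a : Fin D) (k : ℕ) : Bpred D xs a k ≤ 1 := by
  induction k with
  | zero => exact div_le_one_of_le₀ (Nat.one_le_cast.mpr a.pos) D.cast_nonneg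
  | succ k ih =>
    rw [Bpred]
    split_ifs
    · have hcnt := cnt_append_singleton_le_cntPred (xs.drop (xs.length - k)) xs a
      exact div_le_one_of_le₀ (add_le_add (Nat.cast_le.mpr hcnt) ih) (by positivity)
    · exact ih

/-- The value the order-`k` predictor would assign to `a` after the string `z` if the context,
which in `B(a | z, k)` is the block of the last `k` symbols of `z`, were `w`. Decoupling the
context from `z` lets `z` grow while `w` is fixed. -/
noncomputable def contextPred (k : ℕ) (w : List (Fin D)) (a : Fin D) (z : List (Fin D)) : ℝ :=
  (cnt (w ++ [a]) z + Bpred D z a k) / (cntPred w z + 1)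

lemma Bpred_pref_eq_contextPred (x : ℕ → Fin D) (a : Fin D) (j k : ℕ) :
    Bpred D (pref x (j + k)) a (k + 1) =
      contextPred k (window x j k) a (pref x (j + k)) := by
  simp [Bpred, contextPred, drop_pref]

/-- `p w` is the limiting frequency of occurrences of the word `w` in the sequence `x`, for
every `w`. -/
def HasWordFrequencies (x : ℕ → Fin D) (p : List (Fin D) → ℝ) : Prop :=
  ∀ w, Tendsto (fun n : ℕ ↦ (cnt w (pref x n) : ℝ) / n) atTop (𝓝 (p w))

namespace HasWordFrequencies

variable {x : ℕ → Fin D} {p : List (Fin D) → ℝ}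

lemma tendsto_cntPred_div (hx : HasWordFrequencies x p) (w : List (Fin D)) :
    Tendsto (fun n : ℕ ↦ (cntPred w (pref x n) : ℝ) / n) atTop (𝓝 (p w)) := by
  rw [← tendsto_add_const_div_natCast_iff 1]
  simpa only [cntPred_pref_succ] using hx w

lemma append_singleton_le (hx : HasWordFrequencies x p) (w : List (Fin D)) (a : Fin D) :
    p (w ++ [a]) ≤ p w := by
  refine le_of_tendsto_of_tendsto' (hx (w ++ [a])) (hx.tendsto_cntPred_div w) fun n ↦ ?_
  gcongr
  exact cnt_append_singleton_le_cntPred w _ a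

lemma tendsto_contextPred (hx : HasWordFrequencies x p) (k : ℕ) {w : List (Fin D)}
    (hw : p w ≠ 0) (a : Fin D) :
    Tendsto (fun n ↦ contextPred k w a (pref x n)) atTop (𝓝 (p (w ++ [a]) / p w)) := by
  have hone : Tendsto (fun n : ℕ ↦ 1 / (n : ℝ)) atTop (𝓝 0) :=
    tendsto_const_div_atTop_nhds_zero_nat 1
  have hlower : Tendsto (fun n : ℕ ↦ Bpred D (pref x n) a k / n) atTop (𝓝 0) := by
    refine squeeze_zero (fun n ↦ ?_) (fun n ↦ ?_) hone
    · exact div_nonneg (Bpred_pos _ _ _).le n.cast_nonneg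
    · exact div_le_div_of_nonneg_right (Bpred_le_one _ _ _) n.cast_nonneg
  have hnum := (hx (w ++ [a])).add hlower
  have hden := (hx.tendsto_cntPred_div w).add hone
  rw [add_zero] at hnum hden
  refine (hnum.div hden hw).congr' ?_
  filter_upwards [eventually_gt_atTop 0] with n hn
  rw [Pi.div_apply, ← add_div, ← add_div, div_div_div_cancel_right₀ (by positivity), contextPred]

lemma tendsto_log_Bpred_sub_log (hx : HasWordFrequencies x p) {k : ℕ}
    (hpos : ∀ j, 0 < p (window x j (k + 1))) :
    Tendsto (fun j ↦ Real.log (Bpred D (pref x (j + k)) (x (j + k)) (k + 1)) -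
      Real.log (p (window x j (k + 1)) / p (window x j k))) atTop (𝓝 0) := by
  have hfinite : (Set.range fun j ↦ (window x j k, x (j + k))).Finite := by
    refine ((List.finite_length_eq (Fin D) k).prod Set.finite_univ).subset ?_
    rintro _ ⟨j, rfl⟩
    simp [window]
  have hlim (j : ℕ) : Tendsto (fun n ↦ Real.log
      (contextPred k (window x j k) (x (j + k)) (pref x (n + k)))) atTop
      (𝓝 (Real.log (p (window x j k ++ [x (j + k)]) / p (window x j k)))) := by
    have hword : 0 < p (window x j k ++ [x (j + k)]) := window_succ x j k ▸ hpos j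
    have hcontext : 0 < p (window x j k) := hword.trans_le (hx.append_singleton_le _ _)
    exact ((hx.tendsto_contextPred k hcontext.ne' _).comp (tendsto_add_atTop_nat k)).log
      (div_pos hword hcontext).ne'
  simpa only [Bpred_pref_eq_contextPred, window_succ] using
    tendsto_diagonal_sub_of_finite_range hfinite
      (F := fun c n ↦ Real.log (contextPred k c.1 c.2 (pref x (n + k))))
      (L := fun c ↦ Real.log (p (c.1 ++ [c.2]) / p c.1)) hlim

lemma tendsto_neg_log_prod_Bpred_div (hx : HasWordFrequencies x p) {k : ℕ}
    (hpos : ∀ j, 0 < p (window x j (k + 1))) {h : ℝ}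
    (hloss : Tendsto (fun n : ℕ ↦ (∑ j ∈ Finset.range n,
      -Real.log (p (window x j (k + 1)) / p (window x j k))) / n) atTop (𝓝 h)) :
    Tendsto (fun n : ℕ ↦ -Real.log (∏ i ∈ Finset.Icc (k + 1) n,
      Bpred D (pref x (i - 1)) (x (i - 1)) (k + 1)) / n) atTop (𝓝 h) := by
  rw [← tendsto_add_const_div_natCast_iff k]
  have hdiff := (hx.tendsto_log_Bpred_sub_log hpos).cesaro
  refine (sub_zero h ▸ hloss.sub hdiff).congr fun n ↦ ?_
  have hprod : ∏ i ∈ Finset.Icc (k + 1) (n + k), Bpred D (pref x (i - 1)) (x (i - 1)) (k + 1) =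
      ∏ j ∈ Finset.range n, Bpred D (pref x (j + k)) (x (j + k)) (k + 1) := by
    rw [← Finset.Ico_add_one_right_eq_Icc, Finset.prod_Ico_eq_prod_range]
    exact Finset.prod_congr (by grind) (by grind)
  rw [hprod, Real.log_prod fun j _ ↦ (Bpred_pos _ _ _).ne', Finset.sum_sub_distrib,
    Finset.sum_neg_distrib]
  ring

end HasWordFrequencies

end Words

section WordProbability

variable {D : ℕ}

/-- The probability `Q(w)` that the sample path `X_1, X_2, …` starts with the word `w`. -/
noncomputable def wordProb (Q : Measure (Omega D)) (w : List (Fin D)) : ℝ :=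
  Q.real {ω | pref (path D ω) w.length = w}

lemma Qstr_eq_wordProb (Q : Measure (Omega D)) (x : ℕ → Fin D) (n : ℕ) :
    Qstr D Q x n = wordProb Q (pref x n) := by
  rw [Qstr, wordProb, Measure.real]
  congr 2
  ext ω
  simp [cylSet, pref, path]

lemma path_iterate_shiftT (ω : Omega D) (j : ℕ) :
    path D ((shiftT D)^[j] ω) = fun i ↦ path D ω (j + i) := by
  induction j generalizing ω with
  | zero => simp
  | succ j ih =>
    rw [Function.iterate_succ_apply, ih]
    ext i
    simp only [path, shiftT]
    congr 2
    push_cast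
    ring

lemma pref_path_iterate_shiftT (ω : Omega D) (j m : ℕ) :
    pref (path D ((shiftT D)^[j] ω)) m = window (path D ω) j m := by
  rw [path_iterate_shiftT, window]

lemma measurable_path_initial (n : ℕ) :
    Measurable fun (ω : Omega D) (i : Fin n) ↦ path D ω i := by
  unfold path
  fun_prop

lemma measurable_comp_pref {β : Type*} [MeasurableSpace β] (n : ℕ) (F : List (Fin D) → β) :
    Measurable fun ω : Omega D ↦ F (pref (path D ω) n) := by
  simp only [pref_eq_ofFn]
  exact (measurable_of_finite fun v : Fin n → Fin D ↦ F (List.ofFn v)).comp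
    (measurable_path_initial n)

lemma integral_ite_pref_eq (Q : Measure (Omega D)) (w : List (Fin D)) :
    ∫ ω, (if pref (path D ω) w.length = w then 1 else 0) ∂Q = wordProb Q w := by
  have hmeas : MeasurableSet {ω : Omega D | pref (path D ω) w.length = w} :=
    (measurable_comp_pref w.length (· = w)).setOf
  rw [wordProb, ← integral_indicator_one hmeas]
  simp [Set.indicator_apply]

variable (Q : Measure (Omega D)) [IsFiniteMeasure Q]

lemma integrable_comp_pref {E : Type*} [NormedAddCommGroup E] (n : ℕ) (F : List (Fin D) → E) :
    Integrable (fun ω ↦ F (pref (path D ω) n)) Q := by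
  simp only [pref_eq_ofFn]
  exact (Integrable.of_finite (f := fun v : Fin n → Fin D ↦ F (List.ofFn v))).comp_measurable
    (measurable_path_initial n)

lemma integrable_neg_log_wordProb_div (k : ℕ) :
    Integrable (fun ω ↦ -Real.log
      (wordProb Q (pref (path D ω) (k + 1)) / wordProb Q (pref (path D ω) k))) Q := by
  have htake (ω : Omega D) : (pref (path D ω) (k + 1)).take k = pref (path D ω) k := by
    rw [pref_succ, List.take_left' (length_pref _ k)]
  simpa only [htake] using
    integrable_comp_pref Q (k + 1) fun u ↦ -Real.log (wordProb Q u / wordProb Q (u.take k))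

lemma ae_wordProb_pref_pos (m : ℕ) : ∀ᵐ ω ∂Q, 0 < wordProb Q (pref (path D ω) m) := by
  have hnull (w : List (Fin D)) :
      ∀ᵐ ω ∂Q, pref (path D ω) w.length = w → wordProb Q w ≠ 0 := by
    by_cases hw : wordProb Q w = 0
    · rw [wordProb, measureReal_eq_zero_iff] at hw
      filter_upwards [measure_eq_zero_iff_ae_notMem.mp hw] with ω hω hmem
      exact absurd hmem hω
    · exact .of_forall fun _ _ ↦ hw
  filter_upwards [ae_all_iff.mpr hnull] with ω hω
  exact measureReal_nonneg.lt_of_ne' (hω (pref (path D ω) m) (by rw [length_pref]))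

variable {Q}

lemma ae_forall_wordProb_window_pos (hQ : MeasurePreserving (shiftT D) Q Q) (m : ℕ) :
    ∀ᵐ ω ∂Q, ∀ j, 0 < wordProb Q (window (path D ω) j m) := by
  refine ae_all_iff.mpr fun j ↦ ?_
  simpa only [pref_path_iterate_shiftT] using
    (hQ.iterate j).quasiMeasurePreserving.ae (ae_wordProb_pref_pos Q m)

end WordProbability

section Ergodic

variable {D : ℕ} {Q : Measure (Omega D)} [IsProbabilityMeasure Q]

lemma ae_hasWordFrequencies (hQ : Ergodic (shiftT D) Q) :
    ∀ᵐ ω ∂Q, HasWordFrequencies (path D ω) (wordProb Q) := by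
  refine ae_all_iff.mpr fun w ↦ ?_
  have hint : Integrable (fun ω ↦ if pref (path D ω) w.length = w then (1 : ℝ) else 0) Q :=
    integrable_comp_pref Q w.length fun u ↦ if u = w then 1 else 0
  filter_upwards [ae_tendsto_birkhoffAverage hQ hint] with ω hω
  rw [integral_ite_pref_eq] at hω
  rw [← tendsto_add_const_div_natCast_iff w.length]
  simp only [birkhoffAverage, birkhoffSum, smul_eq_mul, inv_mul_eq_div,
    pref_path_iterate_shiftT] at hω
  simpa [cnt_pref_add_length] using (tendsto_add_const_div_natCast_iff 1).mpr hω

lemma ae_tendsto_sum_neg_log_wordProb_div (hQ : Ergodic (shiftT D) Q) (k : ℕ) :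
    ∀ᵐ ω ∂Q, Tendsto (fun n : ℕ ↦ (∑ j ∈ Finset.range n, -Real.log
        (wordProb Q (window (path D ω) j (k + 1)) / wordProb Q (window (path D ω) j k))) / n)
      atTop (𝓝 (∫ ω, -Real.log
        (wordProb Q (pref (path D ω) (k + 1)) / wordProb Q (pref (path D ω) k)) ∂Q)) := by
  simpa only [birkhoffAverage, birkhoffSum, smul_eq_mul, inv_mul_eq_div,
    pref_path_iterate_shiftT] using
    ae_tendsto_birkhoffAverage hQ (integrable_neg_log_wordProb_div Q k)

end Ergodic

/-- Let `Q` be a stationary ergodic probability measure on `Ω = {1,...,D}^ℤ` and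
`k ≥ 0`. Then `Q`-almost surely
`lim_{n→∞} (1/n)·(−log B(X_{k+1}^n|X_1^k, k)) = E_Q[−log Q(X_{k+1}|X_1^k)]`, where
`B(x_{k+1}^n|x_1^k, k) = ∏_{i=k+1}^n B(x_i|x_1^{i-1}, k)` and
`Q(X_{k+1}|X_1^k) = Q(X_1^{k+1})/Q(X_1^k)` evaluated at the sample path. -/
theorem markov_predictor_entropy_limit
    (D : ℕ) (hD : 2 ≤ D)
    (Q : Measure (Omega D)) [IsProbabilityMeasure Q]
    (hQerg : Ergodic (shiftT D) Q) (k : ℕ) :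
    ∀ᵐ ω ∂Q,
      Tendsto (fun n : ℕ =>
          -Real.log (∏ i ∈ Finset.Icc (k + 1) n,
            Bpred D (pref (path D ω) (i - 1)) (path D ω (i - 1)) (k + 1)) / n)
        atTop
        (𝓝 (∫ ω', -Real.log
          (Qstr D Q (path D ω') (k + 1) / Qstr D Q (path D ω') k) ∂Q)) := by
  simp only [Qstr_eq_wordProb]
  filter_upwards [ae_hasWordFrequencies hQerg,
    ae_forall_wordProb_window_pos hQerg.toMeasurePreserving (k + 1),
    ae_tendsto_sum_neg_log_wordProb_div hQerg k] with ω hfreq hpos hloss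
  exact hfreq.tendsto_neg_log_prod_Bpred_div hpos hloss
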